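/- Let α > 0, let s be a positive integer, and let g : ℕ → (0,1) be a decreasing function. For every graph G of density p > 0 and every equipartition P₀ of V(G) of order s, there exist equipartitions Q ⪯ P of V(G), both refining P₀ with Q refining P, such that: (i) Q is weak g(|P|)-regular; (ii) H(Q) − H(P) < α·p·ln(1/p); and (iii) |P| ≤ E^{(⌊1/α⌋)}(s), where E(x) = x·2^{16/g(x)⁵} and E^{(m)} denotes m-fold iteration. -/

import Mathlib

/-!
The potential `H` of any partition lies between `H(p) = -p ln(1/p)` (Jensen for `x ln x`, see
`Hent_le_pot`) and `0` (densities are at most `1`, see `pot_nonpos`). Starting from `P₀`, replace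
the current partition `P` repeatedly by a weak `g(|P|)`-regular equitable refinement with at most
`E(|P|)` parts. If none of the first `⌊1/α⌋ + 1` replacements raised the potential by less than
`α p ln(1/p)`, the total rise would exceed `p ln(1/p)`, which is impossible. The first cheap
replacement gives `P` and `Q`.

The refinement comes from `weak_regularity`, an energy increment argument with the usual `L²`
energy. If disjoint `S, T` witness irregularity of `P`, every part of `P` is cut equitably into
`M = ⌈8/ε²⌉` pieces so that all but at most `|V|/M` vertices of `S`, and likewise of `T`, lie in
pieces contained in `S`, resp. `T` (`exists_equitable_refinement`). By Pythagoras and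
Cauchy–Schwarz the normalised energy grows by at least `ε⁴/2` (`energy_gain`). As it is at most
`1`, there are at most `⌊2/ε⁴⌋ + 1` rounds, and `M ^ (⌊2/ε⁴⌋ + 1) ≤ 2 ^ (16/ε⁵)`
(`pow_bound`). When the parts are too small to be cut into `M` nonempty pieces, the partition into
singletons, which is weak regular for trivial reasons, has few enough parts.
-/

open Finset
open scoped Classical

/-- `eCnt G A B` is the number of ordered pairs `(u,v) ∈ A × B` with `uv` an edge of `G`. -/
noncomputable def eCnt {V : Type*} [Fintype V] (G : SimpleGraph V) (A B : Finset V) : ℕ :=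
  ((A ×ˢ B).filter fun p => G.Adj p.1 p.2).card

/-- The edge density `d(A,B)` between vertex subsets `A` and `B`. -/
noncomputable def dens {V : Type*} [Fintype V] (G : SimpleGraph V) (A B : Finset V) : ℝ :=
  eCnt G A B / (A.card * B.card)

/-- The function `H(x) = x ln x` (with `0 ln 0 = 0`, which holds for `Real.log`). -/
noncomputable def Hent (x : ℝ) : ℝ := x * Real.log x

/-- The entropy potential `H(P,P')` of a partition `P` of `A ⊆ V(G)` and a partition `P'`
of `A' ⊆ V(G)`: `H(P,P') = Σ_{W ∈ P, W' ∈ P'} (|W||W'|/(|A||A'|))·H(d(W,W'))`. -/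
noncomputable def pot {V : Type*} [Fintype V] [DecidableEq V] (G : SimpleGraph V)
    {A A' : Finset V} (P : Finpartition A) (P' : Finpartition A') : ℝ :=
  ∑ W ∈ P.parts, ∑ W' ∈ P'.parts,
    ((W.card : ℝ) * W'.card / ((A.card : ℝ) * A'.card)) * Hent (dens G W W')

/-- The density `d_G = 2|E|/|V|²` of a graph. -/
noncomputable def graphDensity {V : Type*} [Fintype V] (G : SimpleGraph V) : ℝ :=
  2 * G.edgeSet.ncard / (Fintype.card V : ℝ) ^ 2

/-- A partition `{V₁,…,V_k}` of the vertex set is weak `ε`-regular if for all disjoint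
`S, T ⊆ V` with `|S|, |T| ≥ ε|V|` we have
`Σ_{i,j} (|S ∩ V_i||T ∩ V_j|/(|S||T|))·|d(S ∩ V_i, T ∩ V_j) − d(V_i,V_j)| ≤ ε`. -/
def IsWeakRegular {V : Type*} [Fintype V] [DecidableEq V] (G : SimpleGraph V) (ε : ℝ)
    (P : Finpartition (univ : Finset V)) : Prop :=
  ∀ S T : Finset V, Disjoint S T →
    ε * Fintype.card V ≤ S.card → ε * Fintype.card V ≤ T.card →
    ∑ U ∈ P.parts, ∑ U' ∈ P.parts,
      ((S ∩ U).card : ℝ) * ((T ∩ U').card : ℝ) / (S.card * T.card) *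
        |dens G (S ∩ U) (T ∩ U') - dens G U U'| ≤ ε

set_option linter.unusedSectionVars false

/-! ### Block averages and energy -/

/-- `0/1`-valued adjacency indicator of `G`. -/
noncomputable def adjInd {V : Type*} (G : SimpleGraph V) (x y : V) : ℝ :=
  if G.Adj x y then 1 else 0

/-- The block-averaged adjacency matrix of `G` with respect to `P`: its `(x, y)` entry is the
density between the parts containing `x` and `y`. -/
noncomputable def stepDens {V : Type*} [Fintype V] [DecidableEq V] (G : SimpleGraph V)
    (P : Finpartition (univ : Finset V)) (x y : V) : ℝ :=
  dens G (P.part x) (P.part y)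

/-- The `L²` energy of `P`, unnormalised: the squared Frobenius norm of the block-averaged
adjacency matrix. -/
noncomputable def energy {V : Type*} [Fintype V] [DecidableEq V] (G : SimpleGraph V)
    (P : Finpartition (univ : Finset V)) : ℝ :=
  ∑ x, ∑ y, stepDens G P x y ^ 2

/-- `A` is a union of parts of `P`. -/
def Saturated {V : Type*} [Fintype V] [DecidableEq V]
    (P : Finpartition (univ : Finset V)) (A : Finset V) : Prop :=
  ∀ x ∈ A, P.part x ⊆ A

/-- The union of the parts of `P` contained in `A`. -/
noncomputable def core {V : Type*} [Fintype V] [DecidableEq V]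
    (P : Finpartition (univ : Finset V)) (A : Finset V) : Finset V :=
  univ.filter fun x => P.part x ⊆ A

section Basic

variable {V : Type*} [Fintype V] [DecidableEq V] (G : SimpleGraph V)
  (P Q : Finpartition (univ : Finset V))

lemma eCnt_eq_sum (A B : Finset V) :
    (eCnt G A B : ℝ) = ∑ x ∈ A, ∑ y ∈ B, adjInd G x y := by
  rw [← Finset.sum_product']
  simp only [eCnt, adjInd, Finset.sum_boole]

lemma adjInd_nonneg (x y : V) : 0 ≤ adjInd G x y := by
  unfold adjInd; split_ifs <;> norm_num

lemma adjInd_le_one (x y : V) : adjInd G x y ≤ 1 := by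
  unfold adjInd; split_ifs <;> norm_num

lemma graph_dens_nonneg (A B : Finset V) : 0 ≤ dens G A B := by
  unfold _root_.dens; positivity

lemma graph_dens_le_one (A B : Finset V) : dens G A B ≤ 1 := by
  unfold _root_.dens
  refine div_le_one_of_le₀ ?_ (by positivity)
  rw [← Nat.cast_mul, Nat.cast_le, ← Finset.card_product]
  exact Finset.card_filter_le _ _

lemma card_mul_card_mul_dens (A B : Finset V) :
    (A.card : ℝ) * B.card * dens G A B = eCnt G A B := by
  unfold _root_.dens
  by_cases h : (A.card : ℝ) * B.card = 0
  · have : eCnt G A B = 0 := by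
      rw [← Nat.cast_mul, Nat.cast_eq_zero, ← Finset.card_product] at h
      unfold eCnt
      exact Nat.eq_zero_of_le_zero (h ▸ Finset.card_filter_le _ _)
    rw [h, this]; simp
  · exact mul_div_cancel₀ _ h

lemma mem_part_comm {x y : V} : x ∈ P.part y ↔ y ∈ P.part x := by
  rw [P.mem_part_iff_part_eq_part (mem_univ _) (mem_univ _),
    P.mem_part_iff_part_eq_part (mem_univ _) (mem_univ _), eq_comm]

lemma part_eq_of_mem_part {x y : V} (h : x ∈ P.part y) : P.part x = P.part y :=
  (P.mem_part_iff_part_eq_part (mem_univ _) (mem_univ _)).1 h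

variable {P Q}

lemma saturated_core (A : Finset V) : Saturated P (core P A) := by
  intro x hx y hy
  simp only [core, mem_filter, mem_univ, true_and] at hx ⊢
  rwa [part_eq_of_mem_part P hy]

lemma core_subset (A : Finset V) : core P A ⊆ A := by
  intro x hx
  simp only [core, mem_filter, mem_univ, true_and] at hx
  exact hx (P.mem_part (mem_univ _))

lemma Saturated.inter {A B : Finset V} (hA : Saturated P A) (hB : Saturated P B) :
    Saturated P (A ∩ B) := by
  intro x hx
  rw [mem_inter] at hx
  exact subset_inter (hA x hx.1) (hB x hx.2)

lemma saturated_of_le (h : Q ≤ P) {U : Finset V} (hU : U ∈ P.parts) : Saturated Q U := by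
  intro x hx
  obtain ⟨W, hW, hle⟩ := h (Q.part_mem.2 (mem_univ x))
  have : W = U := P.eq_of_mem_parts hW hU (hle (Q.mem_part (mem_univ x))) hx
  exact this ▸ hle

/-- Replacing a function by its averages over the parts does not change its sum over a union
of parts. -/
lemma sum_avg {A : Finset V} (hA : Saturated P A) (h : V → ℝ) :
    ∑ x ∈ A, (∑ x' ∈ P.part x, h x') / (P.part x).card = ∑ x ∈ A, h x := by
  have h1 : ∀ x ∈ A, (∑ x' ∈ P.part x, h x') / (P.part x).card =
      ∑ x' ∈ A, if x' ∈ P.part x then h x' / (P.part x').card else 0 := by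
    intro x hx
    rw [Finset.sum_div, ← Finset.sum_filter]
    have : A.filter (fun x' => x' ∈ P.part x) = P.part x := by
      ext y; simp only [mem_filter, and_iff_right_iff_imp]; exact fun hy => hA x hx hy
    rw [this]
    exact Finset.sum_congr rfl fun y hy => by rw [part_eq_of_mem_part P hy]
  rw [Finset.sum_congr rfl h1, Finset.sum_comm]
  refine Finset.sum_congr rfl fun x hx => ?_
  rw [← Finset.sum_filter]
  have : A.filter (fun y => x ∈ P.part y) = P.part x := by
    ext y; simp only [mem_filter, mem_part_comm P (x := x)]
    exact ⟨fun h => h.2, fun hy => ⟨hA x hx hy, hy⟩⟩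
  rw [this, Finset.sum_const, nsmul_eq_mul]
  have : ((P.part x).card : ℝ) ≠ 0 := by
    rw [Nat.cast_ne_zero, Finset.card_ne_zero]
    exact P.part_nonempty.2 (mem_univ x)
  field_simp

/-- Block averaging preserves the number of edges between unions of parts. -/
lemma sum_stepDens {A B : Finset V} (hA : Saturated P A) (hB : Saturated P B) :
    ∑ x ∈ A, ∑ y ∈ B, stepDens G P x y = ∑ x ∈ A, ∑ y ∈ B, adjInd G x y := by
  have h1 : ∀ x, ∑ y ∈ B, stepDens G P x y =
      (∑ x' ∈ P.part x, ∑ y ∈ B, adjInd G x' y) / (P.part x).card := by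
    intro x
    rw [Finset.sum_comm, ← sum_avg hB (fun y => ∑ x' ∈ P.part x, adjInd G x' y), Finset.sum_div]
    refine Finset.sum_congr rfl fun y _ => ?_
    unfold stepDens _root_.dens
    rw [eCnt_eq_sum, Finset.sum_comm, div_div, mul_comm]
  simp_rw [h1]
  exact sum_avg hA _

lemma stepDens_of_mem {U W : Finset V} (hU : U ∈ P.parts) (hW : W ∈ P.parts) {x y : V}
    (hx : x ∈ U) (hy : y ∈ W) : stepDens G P x y = dens G U W := by
  unfold stepDens
  rw [P.part_eq_of_mem hU hx, P.part_eq_of_mem hW hy]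

lemma sum_inter_parts (P : Finpartition (univ : Finset V)) (A : Finset V) (f : V → ℝ) :
    ∑ U ∈ P.parts, ∑ x ∈ A ∩ U, f x = ∑ x ∈ A, f x := by
  rw [← Finset.sum_biUnion]
  · refine Finset.sum_congr ?_ fun _ _ => rfl
    rw [← Finset.inter_biUnion]
    have h : P.parts.biUnion (fun U => U) = univ := P.biUnion_parts
    rw [h, inter_univ]
  · intro U hU W hW hne
    exact (P.disjoint hU hW hne).mono inter_subset_right inter_subset_right

lemma sum_inter_parts₂ (P : Finpartition (univ : Finset V)) (A B : Finset V) (f : V → V → ℝ) :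
    ∑ U ∈ P.parts, ∑ W ∈ P.parts, ∑ x ∈ A ∩ U, ∑ y ∈ B ∩ W, f x y =
      ∑ x ∈ A, ∑ y ∈ B, f x y := by
  rw [← sum_inter_parts P A]
  refine Finset.sum_congr rfl fun U _ => ?_
  rw [Finset.sum_comm]
  exact Finset.sum_congr rfl fun x _ => sum_inter_parts P B _

/-- Pythagoras: the averaged matrix of `P` is the orthogonal projection of that of `Q`. -/
lemma energy_eq_add (h : Q ≤ P) :
    energy G Q = energy G P + ∑ x, ∑ y, (stepDens G Q x y - stepDens G P x y) ^ 2 := by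
  have h0 : ∑ x, ∑ y, (stepDens G Q x y - stepDens G P x y) * stepDens G P x y = 0 := by
    rw [← sum_inter_parts₂ P]
    refine Finset.sum_eq_zero fun U hU => Finset.sum_eq_zero fun W hW => ?_
    rw [univ_inter, univ_inter]
    have h1 : ∀ x ∈ U, ∀ y ∈ W, (stepDens G Q x y - stepDens G P x y) * stepDens G P x y =
        (stepDens G Q x y - stepDens G P x y) * dens G U W := fun x hx y hy => by
      rw [stepDens_of_mem G hU hW hx hy]
    rw [Finset.sum_congr rfl fun x hx => Finset.sum_congr rfl (h1 x hx)]
    simp_rw [← Finset.sum_mul, Finset.sum_sub_distrib]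
    rw [sum_stepDens G (saturated_of_le h hU) (saturated_of_le h hW),
      sum_stepDens G (saturated_of_le le_rfl hU) (saturated_of_le le_rfl hW), sub_self, zero_mul]
  have h2 : energy G Q = energy G P + ∑ x, ∑ y, (stepDens G Q x y - stepDens G P x y) ^ 2
      + 2 * ∑ x, ∑ y, (stepDens G Q x y - stepDens G P x y) * stepDens G P x y := by
    simp only [energy, Finset.mul_sum, ← Finset.sum_add_distrib]
    exact Finset.sum_congr rfl fun x _ => Finset.sum_congr rfl fun y _ => by ring
  rw [h2, h0]; ring

lemma energy_nonneg : 0 ≤ energy G P := by unfold energy; positivity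

lemma energy_le : energy G P ≤ (Fintype.card V : ℝ) ^ 2 := by
  have : energy G P ≤ ∑ _x : V, ∑ _y : V, (1 : ℝ) := by
    refine Finset.sum_le_sum fun x _ => Finset.sum_le_sum fun y _ => ?_
    exact pow_le_one₀ (graph_dens_nonneg _ _ _) (graph_dens_le_one _ _ _)
  simpa [sq] using this

lemma isWeakRegular_bot {ε : ℝ} (hε : 0 ≤ ε) : IsWeakRegular G ε ⊥ := by
  intro S T _ _ _
  refine le_trans (le_of_eq ?_) hε
  refine Finset.sum_eq_zero fun U hU => Finset.sum_eq_zero fun W hW => ?_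
  simp only [Finpartition.parts_bot, mem_map, mem_univ, true_and] at hU hW
  obtain ⟨u, rfl⟩ := hU
  obtain ⟨w, rfl⟩ := hW
  by_cases hu : u ∈ S
  · by_cases hw : w ∈ T
    · simp [hu, hw]
    · simp [hw]
  · simp [hu]

end Basic

/-! ### Energy increment from irregularity -/

section Gain

variable {V : Type*} [Fintype V] [DecidableEq V] (G : SimpleGraph V)
  {P Q : Finpartition (univ : Finset V)}

/-- Passing from `A × B` to a sub-rectangle changes a sum of terms bounded by `1` by at most
the number of discarded pairs. -/
lemma abs_sum_le_of_subset {A A' B B' : Finset V} (hA : A' ⊆ A) (hB : B' ⊆ B)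
    (f : V → V → ℝ) (hf : ∀ x y, |f x y| ≤ 1) :
    |∑ x ∈ A, ∑ y ∈ B, f x y| ≤ |∑ x ∈ A', ∑ y ∈ B', f x y| +
      ((A.card : ℝ) * B.card - A'.card * B'.card) := by
  have hsub : A' ×ˢ B' ⊆ A ×ˢ B := product_subset_product hA hB
  rw [← Finset.sum_product', ← Finset.sum_product', ← Finset.sum_sdiff hsub, add_comm]
  refine (abs_add_le _ _).trans (add_le_add_right ?_ _)
  refine (Finset.abs_sum_le_sum_abs _ _).trans ?_
  refine (Finset.sum_le_sum fun i _ => hf i.1 i.2).trans ?_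
  rw [Finset.sum_const, nsmul_eq_mul, mul_one, Finset.card_sdiff_of_subset hsub,
    Nat.cast_sub (Finset.card_le_card hsub)]
  simp

lemma abs_adjInd_sub_le (x y : V) : |adjInd G x y - stepDens G P x y| ≤ 1 := by
  have h1 := adjInd_nonneg G x y
  have h2 := adjInd_le_one G x y
  have h3 : 0 ≤ stepDens G P x y := graph_dens_nonneg G _ _
  have h4 : stepDens G P x y ≤ 1 := graph_dens_le_one G _ _
  rw [abs_le]; constructor <;> linarith

/-- A witness `(S, T)` of irregularity of `P` forces an energy increase for every refinement
whose parts almost exhaust both `S` and `T`. -/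
lemma energy_gain {ε : ℝ} (hε : 0 < ε) (hle : Q ≤ P) {S T : Finset V}
    (hn : 0 < Fintype.card V)
    (hS : ε * Fintype.card V ≤ S.card) (hT : ε * Fintype.card V ≤ T.card)
    (hirr : ε < ∑ U ∈ P.parts, ∑ U' ∈ P.parts,
      ((S ∩ U).card : ℝ) * ((T ∩ U').card : ℝ) / (S.card * T.card) *
        |dens G (S ∩ U) (T ∩ U') - dens G U U'|)
    (hS' : ((S \ core Q S).card : ℝ) ≤ ε ^ 2 / 8 * Fintype.card V)
    (hT' : ((T \ core Q T).card : ℝ) ≤ ε ^ 2 / 8 * Fintype.card V) :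
    energy G P + ε ^ 4 / 2 * (Fintype.card V : ℝ) ^ 2 ≤ energy G Q := by
  rw [energy_eq_add G hle]
  gcongr
  set n : ℝ := (Fintype.card V : ℝ) with hndef
  have hn' : 0 < n := by rw [hndef]; exact_mod_cast hn
  set S' := core Q S with hS'def
  set T' := core Q T with hT'def
  have hSs : S' ⊆ S := core_subset S
  have hTs : T' ⊆ T := core_subset T
  set a : ℝ := (S.card : ℝ) with ha
  set b : ℝ := (T.card : ℝ) with hb
  have hapos : 0 < a := lt_of_lt_of_le (by positivity) hS
  have hbpos : 0 < b := lt_of_lt_of_le (by positivity) hT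
  have ha' : ((S \ S').card : ℝ) = a - S'.card := by
    rw [Finset.card_sdiff_of_subset hSs, Nat.cast_sub (Finset.card_le_card hSs)]
  have hb' : ((T \ T').card : ℝ) = b - T'.card := by
    rw [Finset.card_sdiff_of_subset hTs, Nat.cast_sub (Finset.card_le_card hTs)]
  rw [ha'] at hS'
  rw [hb'] at hT'
  set a' : ℝ := (S'.card : ℝ) with ha''
  set b' : ℝ := (T'.card : ℝ) with hb''
  have haa : a' ≤ a := by rw [ha, ha'']; exact_mod_cast Finset.card_le_card hSs
  have hbb : b' ≤ b := by rw [hb, hb'']; exact_mod_cast Finset.card_le_card hTs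
  have ha0 : 0 ≤ a' := by positivity
  have hb0 : 0 ≤ b' := by positivity
  set D : V → V → ℝ := fun x y => stepDens G Q x y - stepDens G P x y with hD
  -- Multiplying out the weights turns the irregularity into signed edge discrepancies.
  have h1 : ε * (a * b) < ∑ U ∈ P.parts, ∑ W ∈ P.parts,
      |∑ x ∈ S ∩ U, ∑ y ∈ T ∩ W, (adjInd G x y - stepDens G P x y)| := by
    rw [← lt_div_iff₀ (by positivity)]
    refine hirr.trans_le (le_of_eq ?_)
    rw [Finset.sum_div]
    refine Finset.sum_congr rfl fun U hU => ?_
    rw [Finset.sum_div]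
    refine Finset.sum_congr rfl fun W hW => ?_
    have e1 : ∑ x ∈ S ∩ U, ∑ y ∈ T ∩ W, (adjInd G x y - stepDens G P x y) =
        ((S ∩ U).card : ℝ) * (T ∩ W).card * (dens G (S ∩ U) (T ∩ W) - dens G U W) := by
      rw [mul_sub, card_mul_card_mul_dens, eCnt_eq_sum]
      simp_rw [Finset.sum_sub_distrib]
      congr 1
      rw [Finset.sum_congr rfl fun x hx => Finset.sum_congr rfl fun y hy =>
        stepDens_of_mem G hU hW (mem_inter.1 hx).2 (mem_inter.1 hy).2]
      simp [mul_assoc]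
    rw [e1, abs_mul, abs_of_nonneg (by positivity : (0:ℝ) ≤ (S ∩ U).card * (T ∩ W).card)]
    ring
  have h2 : ∑ U ∈ P.parts, ∑ W ∈ P.parts,
      |∑ x ∈ S ∩ U, ∑ y ∈ T ∩ W, (adjInd G x y - stepDens G P x y)| ≤
      ∑ x ∈ S', ∑ y ∈ T', |D x y| + (a * b - a' * b') := by
    have e2 : ∀ A B : Finset V, (A.card : ℝ) * B.card = ∑ U ∈ P.parts, ∑ W ∈ P.parts,
        ((A ∩ U).card : ℝ) * (B ∩ W).card := by
      intro A B
      have := sum_inter_parts₂ P A B (fun _ _ => (1 : ℝ))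
      simp only [Finset.sum_const, nsmul_eq_mul, mul_one] at this
      exact this.symm
    rw [ha, hb, ha'', hb'', e2 S T, e2 S' T', ← sum_inter_parts₂ P S' T']
    simp_rw [← Finset.sum_sub_distrib, ← Finset.sum_add_distrib]
    refine Finset.sum_le_sum fun U hU => Finset.sum_le_sum fun W hW => ?_
    refine (abs_sum_le_of_subset (inter_subset_inter_right hSs) (inter_subset_inter_right hTs) _
      (abs_adjInd_sub_le G)).trans ?_
    gcongr
    have e3 : ∑ x ∈ S' ∩ U, ∑ y ∈ T' ∩ W, (adjInd G x y - stepDens G P x y) =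
        ∑ x ∈ S' ∩ U, ∑ y ∈ T' ∩ W, D x y := by
      simp_rw [hD, Finset.sum_sub_distrib]
      rw [sum_stepDens G ((saturated_core S).inter (saturated_of_le hle hU))
        ((saturated_core T).inter (saturated_of_le hle hW))]
    rw [e3]
    exact (Finset.abs_sum_le_sum_abs _ _).trans
      (Finset.sum_le_sum fun x _ => Finset.abs_sum_le_sum_abs _ _)
  -- Discarding the pairs outside `S' × T'` costs at most a quarter of the discrepancy.
  have h3 : a * b - a' * b' ≤ ε / 4 * (a * b) := by
    have f1 : (a - a') * b ≤ ε / 8 * a * b := by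
      refine mul_le_mul_of_nonneg_right (hS'.trans ?_) hbpos.le
      linarith [mul_le_mul_of_nonneg_left hS (by positivity : 0 ≤ ε / 8)]
    have f2 : a' * (b - b') ≤ a * (ε / 8 * b) := by
      refine mul_le_mul haa (hT'.trans ?_) (by linarith) hapos.le
      linarith [mul_le_mul_of_nonneg_left hT (by positivity : 0 ≤ ε / 8)]
    linarith
  have h4 : 3 / 4 * ε * (a * b) ≤ ∑ x ∈ S', ∑ y ∈ T', |D x y| := by linarith
  have h5 : (∑ x ∈ S', ∑ y ∈ T', |D x y|) ^ 2 ≤ (a * b) * ∑ x, ∑ y, D x y ^ 2 := by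
    rw [← Finset.sum_product', ← Finset.sum_product']
    refine sq_sum_le_card_mul_sum_sq.trans ?_
    simp_rw [sq_abs]
    have c1 : ((S' ×ˢ T').card : ℝ) ≤ a * b := by
      rw [Finset.card_product, Nat.cast_mul]
      exact mul_le_mul haa hbb hb0 hapos.le
    refine mul_le_mul c1 ?_ (by positivity) (by positivity)
    exact Finset.sum_le_sum_of_subset_of_nonneg (fun _ _ => by simp) fun _ _ _ => by positivity
  have h6 : (3 / 4 * ε * (a * b)) ^ 2 ≤ (a * b) * ∑ x, ∑ y, D x y ^ 2 :=
    (pow_le_pow_left₀ (by positivity) h4 2).trans h5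
  have h7 : 9 / 16 * ε ^ 2 * (a * b) ≤ ∑ x, ∑ y, D x y ^ 2 := by
    refine le_of_mul_le_mul_left ?_ (by positivity : 0 < a * b)
    calc _ = (3 / 4 * ε * (a * b)) ^ 2 := by ring
      _ ≤ _ := h6
  have h8 : (ε * n) * (ε * n) ≤ a * b := mul_le_mul hS hT (by positivity) hapos.le
  calc ε ^ 4 / 2 * n ^ 2 ≤ 9 / 16 * ε ^ 2 * ((ε * n) * (ε * n)) := by
        have : 0 ≤ ε ^ 4 * n ^ 2 := by positivity
        linarith
    _ ≤ 9 / 16 * ε ^ 2 * (a * b) := by gcongr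
    _ ≤ _ := h7

end Gain

/-! ### Equitable refinements -/

section Refine

variable {V : Type*} [Fintype V] [DecidableEq V]

lemma inter_mem_atomise {S T U : Finset V} (hd : Disjoint S T) (hne : (S ∩ U).Nonempty) :
    S ∩ U ∈ (Finpartition.atomise U {S, T}).parts := by
  rw [Finpartition.mem_atomise]
  have hST : T ≠ S := by
    rintro rfl
    rw [disjoint_self, bot_eq_empty] at hd
    simp [hd] at hne
  refine ⟨hne, {S}, by simp, ?_⟩
  ext x
  have hx : x ∈ S → x ∉ T := fun h => Finset.disjoint_left.1 hd h
  simp only [mem_filter, mem_insert, mem_singleton, forall_eq_or_imp, forall_eq, true_iff,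
    hST, false_iff, mem_inter]
  tauto

/-- An equitable `M`-fold refinement of `P` in which almost all of `S` and of `T` is covered
by parts contained in `S`, respectively in `T`. -/
lemma exists_equitable_refinement (P : Finpartition (univ : Finset V)) (hP : P.IsEquipartition)
    {M : ℕ} (hM : 0 < M) (hn : M ≤ Fintype.card V / P.parts.card) {S T : Finset V}
    (hd : Disjoint S T) :
    ∃ Q ≤ P, Q.IsEquipartition ∧ Q.parts.card = P.parts.card * M ∧
      (S \ core Q S).card * M ≤ Fintype.card V ∧ (T \ core Q T).card * M ≤ Fintype.card V := by
  -- All parts of the refinement have `t` or `t + 1` vertices, with the same `t` in every part of `P`.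
  set t := Fintype.card V / P.parts.card / M with ht
  have htpos : t ≠ 0 := (Nat.div_pos hn hM).ne'
  have hlow : ∀ U ∈ P.parts, t * M ≤ U.card := fun U hU =>
    (Nat.div_mul_le_self _ _).trans (by simpa using hP.average_le_card_part hU)
  have hup : ∀ U ∈ P.parts, U.card ≤ t * M + M := fun U hU => by
    have h1 := hP.card_part_le_average_add_one hU
    rw [card_univ] at h1
    have h2 := Nat.lt_div_mul_add (a := Fintype.card V / P.parts.card) hM
    rw [← ht] at h2
    omega
  have hsz : ∀ U ∈ P.parts,
      (M - (U.card - t * M)) * t + (U.card - t * M) * (t + 1) = U.card := fun U hU => by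
    have h1 := hlow U hU
    have h2 := hup U hU
    obtain ⟨r, hr⟩ := Nat.exists_eq_add_of_le h1
    have hrM : r ≤ M := by omega
    obtain ⟨q, hq⟩ := Nat.exists_eq_add_of_le hrM
    have e : U.card - t * M = r := by omega
    rw [e]
    have e' : M - r = q := by omega
    rw [e', hr, hq]; ring
  let R : ∀ U ∈ P.parts, Finpartition U := fun U hU =>
    (Finpartition.atomise U {S, T}).equitabilise (hsz U hU)
  set Q := P.bind R with hQ
  have hQle : Q ≤ P := by
    intro W hW
    obtain ⟨U, hU, hWU⟩ := Finpartition.mem_bind.1 hW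
    exact ⟨U, hU, (R U hU).le hWU⟩
  have key : ∀ A : Finset V,
      (∀ U, (A ∩ U).Nonempty → A ∩ U ∈ (Finpartition.atomise U {S, T}).parts) →
      (A \ core Q A).card * M ≤ Fintype.card V := by
    intro A hA
    have h1 : ∀ U ∈ P.parts, ((A \ core Q A) ∩ U).card ≤ t := by
      intro U hU
      by_cases hne : (A ∩ U).Nonempty
      · refine (Finset.card_le_card ?_).trans
          ((Finpartition.atomise U {S, T}).card_parts_equitabilise_subset_le (hsz U hU)
            (hA U hne))
        intro x hx
        simp only [mem_inter, mem_sdiff] at hx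
        simp only [mem_sdiff, mem_inter, mem_biUnion, mem_filter, id, not_exists, not_and]
        refine ⟨⟨hx.1.1, hx.2⟩, fun W hW hxW => hx.1.2 ?_⟩
        simp only [core, mem_filter, mem_univ, true_and]
        rw [Q.part_eq_of_mem (Finpartition.mem_bind.2 ⟨U, hU, hW.1⟩) hxW]
        exact hW.2.trans inter_subset_left
      · rw [not_nonempty_iff_eq_empty] at hne
        have : (A \ core Q A) ∩ U = ∅ :=
          subset_empty.1 (hne ▸ inter_subset_inter_right sdiff_subset)
        simp [this]
    have h2 : (A \ core Q A).card = ∑ U ∈ P.parts, ((A \ core Q A) ∩ U).card := by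
      have := sum_inter_parts P (A \ core Q A) (fun _ => (1 : ℝ))
      simp only [Finset.sum_const, nsmul_eq_mul, mul_one] at this
      exact_mod_cast this.symm
    rw [h2, Finset.sum_mul]
    calc _ ≤ ∑ U ∈ P.parts, U.card := Finset.sum_le_sum fun U hU =>
          (Nat.mul_le_mul_right M (h1 U hU)).trans (hlow U hU)
      _ = Fintype.card V := by rw [P.sum_card_parts, card_univ]
  refine ⟨Q, hQle, ?_, ?_, key S fun U h => inter_mem_atomise hd h, key T fun U h => ?_⟩
  · refine Set.equitableOn_iff_exists_eq_eq_add_one.2 ⟨t, fun W hW => ?_⟩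
    obtain ⟨U, hU, hWU⟩ := Finpartition.mem_bind.1 hW
    exact Finpartition.card_eq_of_mem_parts_equitabilise hWU
  · rw [hQ, Finpartition.card_bind, Finset.sum_congr rfl (g := fun _ => M), Finset.sum_const,
      card_attach, smul_eq_mul]
    intro U _
    refine ((Finpartition.atomise U.1 {S, T}).card_parts_equitabilise (hsz U.1 U.2) htpos).trans ?_
    have := hup U.1 U.2
    omega
  · rw [Finset.pair_comm]
    exact inter_mem_atomise hd.symm h

end Refine

/-! ### The weak regularity lemma -/

section Regularity

variable {V : Type*} [Fintype V] [DecidableEq V] (G : SimpleGraph V)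

/-- One step of the energy increment; when the parts of `P` are too small to be cut into `M`
pieces, the partition into singletons is used. -/
lemma regularity_step {ε : ℝ} (hε : 0 < ε) (hn : 0 < Fintype.card V) {M : ℕ}
    (hM : 8 / ε ^ 2 ≤ M) (P : Finpartition (univ : Finset V)) (hP : P.IsEquipartition)
    (hirr : ¬ IsWeakRegular G ε P) :
    ∃ Q ≤ P, Q.IsEquipartition ∧ Q.parts.card ≤ P.parts.card * M ∧
      (IsWeakRegular G ε Q ∨
        energy G P + ε ^ 4 / 2 * (Fintype.card V : ℝ) ^ 2 ≤ energy G Q) := by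
  have hM0 : (0 : ℝ) < M := lt_of_lt_of_le (by positivity) hM
  have hM0' : 0 < M := by exact_mod_cast hM0
  by_cases hcase : M ≤ Fintype.card V / P.parts.card
  · unfold IsWeakRegular at hirr
    push Not at hirr
    obtain ⟨S, T, hd, hS, hT, hlt⟩ := hirr
    obtain ⟨Q, hQP, hQ, hcard, hS', hT'⟩ := exists_equitable_refinement P hP hM0' hcase hd
    have conv : ∀ c : ℕ, c * M ≤ Fintype.card V → (c : ℝ) ≤ ε ^ 2 / 8 * Fintype.card V := by
      intro c hc
      have hc' : (c : ℝ) * M ≤ Fintype.card V := by exact_mod_cast hc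
      have h1 : (c : ℝ) * (8 / ε ^ 2) ≤ Fintype.card V :=
        (mul_le_mul_of_nonneg_left hM (Nat.cast_nonneg c)).trans hc'
      have h2 : (c : ℝ) = ε ^ 2 / 8 * (c * (8 / ε ^ 2)) := by field_simp
      rw [h2]; gcongr
    exact ⟨Q, hQP, hQ, hcard.le, Or.inr
      (energy_gain G hε hQP hn hS hT hlt (conv _ hS') (conv _ hT'))⟩
  · refine ⟨⊥, bot_le, Finpartition.bot_isEquipartition _, ?_, Or.inl (isWeakRegular_bot G hε.le)⟩
    rw [Finpartition.card_bot, card_univ]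
    have hk : 0 < P.parts.card := by
      rw [Finset.card_pos]
      refine P.parts_nonempty ?_
      rw [Ne, bot_eq_empty, ← Finset.card_eq_zero, card_univ]; omega
    have := (Nat.div_lt_iff_lt_mul hk).1 (not_le.1 hcase)
    rw [mul_comm]; exact this.le

/-- With `t = 1/ε`, Bernoulli gives `8t² + 1 ≤ (1 + 3t)² ≤ 16^t`, so `⌈8/ε²⌉ ≤ 2^(4/ε)`,
while the exponent is at most `4/ε⁴`. -/
lemma pow_bound {ε : ℝ} (hε : 0 < ε) (hε1 : ε < 1) :
    ((⌈8 / ε ^ 2⌉₊ : ℕ) : ℝ) ^ (⌊2 / ε ^ 4⌋₊ + 1) ≤ 2 ^ ((16 : ℝ) / ε ^ 5) := by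
  have ht : 1 ≤ 1 / ε := by rw [le_div_iff₀ hε]; linarith
  have hM : ((⌈8 / ε ^ 2⌉₊ : ℕ) : ℝ) ≤ 2 ^ (4 / ε) := by
    have h1 : ((⌈8 / ε ^ 2⌉₊ : ℕ) : ℝ) ≤ 8 / ε ^ 2 + 1 := (Nat.ceil_lt_add_one (by positivity)).le
    have h2 : 1 + 1 / ε * 3 ≤ (1 + 3 : ℝ) ^ (1 / ε) :=
      one_add_mul_self_le_rpow_one_add (by norm_num) ht
    have h3 : (2 : ℝ) ^ (4 / ε) = ((1 + 3 : ℝ) ^ (1 / ε)) ^ 2 := by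
      rw [← Real.rpow_natCast, ← Real.rpow_mul (by norm_num),
        show (1 + 3 : ℝ) = 2 ^ (2 : ℝ) by norm_num, ← Real.rpow_mul (by norm_num)]
      congr 1
      push_cast
      ring
    rw [h3]
    have h4 : 8 / ε ^ 2 = 8 * (1 / ε) ^ 2 := by ring
    have h5 : (1 + 1 / ε * 3) ^ 2 ≤ ((1 + 3 : ℝ) ^ (1 / ε)) ^ 2 :=
      pow_le_pow_left₀ (by positivity) h2 2
    nlinarith
  have hN : ((⌊2 / ε ^ 4⌋₊ + 1 : ℕ) : ℝ) ≤ 4 / ε ^ 4 := by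
    have h1 : ((⌊2 / ε ^ 4⌋₊ : ℕ) : ℝ) ≤ 2 / ε ^ 4 := Nat.floor_le (by positivity)
    have h2 : 1 ≤ 1 / ε ^ 4 := by
      rw [le_div_iff₀ (by positivity), one_mul]; exact pow_le_one₀ hε.le hε1.le
    have h3 : 2 / ε ^ 4 = 2 * (1 / ε ^ 4) := by ring
    have h4 : 4 / ε ^ 4 = 4 * (1 / ε ^ 4) := by ring
    push_cast
    linarith
  calc _ ≤ ((2 : ℝ) ^ (4 / ε)) ^ (⌊2 / ε ^ 4⌋₊ + 1) := pow_le_pow_left₀ (by positivity) hM _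
    _ = (2 : ℝ) ^ (4 / ε * ((⌊2 / ε ^ 4⌋₊ + 1 : ℕ) : ℝ)) := by
        rw [Real.rpow_mul (by norm_num), Real.rpow_natCast]
    _ ≤ (2 : ℝ) ^ (4 / ε * (4 / ε ^ 4)) := by
        refine Real.rpow_le_rpow_of_exponent_le (by norm_num) ?_
        gcongr
    _ = _ := by congr 1; field_simp; norm_num

/-- The weak regularity lemma for equitable refinements. -/
lemma weak_regularity {ε : ℝ} (hε : 0 < ε) (hε1 : ε < 1) (hn : 0 < Fintype.card V)
    (P : Finpartition (univ : Finset V)) (hP : P.IsEquipartition) :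
    ∃ Q ≤ P, Q.IsEquipartition ∧ IsWeakRegular G ε Q ∧
      (Q.parts.card : ℝ) ≤ P.parts.card * 2 ^ ((16 : ℝ) / ε ^ 5) := by
  set M := ⌈8 / ε ^ 2⌉₊ with hM
  have hM8 : 8 / ε ^ 2 ≤ M := Nat.le_ceil _
  have hM1 : 1 ≤ M := Nat.one_le_ceil_iff.2 (by positivity)
  have hn' : (0 : ℝ) < Fintype.card V := by exact_mod_cast hn
  have main : ∀ j : ℕ, ∃ Q ≤ P, Q.IsEquipartition ∧ Q.parts.card ≤ P.parts.card * M ^ j ∧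
      (IsWeakRegular G ε Q ∨ j * (ε ^ 4 / 2 * (Fintype.card V : ℝ) ^ 2) ≤ energy G Q) := by
    intro j
    induction j with
    | zero => exact ⟨P, le_rfl, hP, by simp, Or.inr (by simpa using energy_nonneg G)⟩
    | succ j ih =>
      obtain ⟨Q, hQP, hQ, hcard, hQr⟩ := ih
      by_cases hreg : IsWeakRegular G ε Q
      · exact ⟨Q, hQP, hQ, hcard.trans
          (Nat.mul_le_mul_left _ (Nat.pow_le_pow_right hM1 j.le_succ)), Or.inl hreg⟩
      · obtain ⟨Q', hQ'Q, hQ', hcard', hor⟩ := regularity_step G hε hn hM8 Q hQ hreg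
        refine ⟨Q', hQ'Q.trans hQP, hQ', hcard'.trans ?_, hor.imp id fun h => ?_⟩
        · rw [pow_succ, ← mul_assoc]
          exact Nat.mul_le_mul_right _ hcard
        · have := hQr.resolve_left hreg
          push_cast
          linarith
  obtain ⟨Q, hQP, hQ, hcard, hor⟩ := main (⌊2 / ε ^ 4⌋₊ + 1)
  refine ⟨Q, hQP, hQ, hor.resolve_right fun h => ?_, ?_⟩
  · have h1 := h.trans (energy_le G)
    have h2 : 2 / ε ^ 4 < ((⌊2 / ε ^ 4⌋₊ + 1 : ℕ) : ℝ) := by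
      push_cast; exact Nat.lt_floor_add_one _
    have h3 : 2 / ε ^ 4 * (ε ^ 4 / 2 * (Fintype.card V : ℝ) ^ 2) = (Fintype.card V : ℝ) ^ 2 := by
      field_simp
    have h4 := mul_lt_mul_of_pos_right h2
      (by positivity : 0 < ε ^ 4 / 2 * (Fintype.card V : ℝ) ^ 2)
    linarith
  · calc (Q.parts.card : ℝ) ≤ P.parts.card * (M : ℝ) ^ (⌊2 / ε ^ 4⌋₊ + 1) := by
          exact_mod_cast hcard
      _ ≤ _ := by gcongr; exact pow_bound hε hε1

end Regularity

/-! ### Bounds for the entropy potential -/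

section Potential

variable {V : Type*} [Fintype V] [DecidableEq V] (G : SimpleGraph V)

lemma pot_nonpos (P : Finpartition (univ : Finset V)) : pot G P P ≤ 0 := by
  refine Finset.sum_nonpos fun U _ => Finset.sum_nonpos fun W _ => ?_
  exact mul_nonpos_of_nonneg_of_nonpos (by positivity) (mul_nonpos_of_nonneg_of_nonpos
    (graph_dens_nonneg G _ _) (Real.log_nonpos (graph_dens_nonneg G _ _) (graph_dens_le_one G _ _)))

lemma graphDensity_eq : graphDensity G = (eCnt G univ univ : ℝ) / (Fintype.card V : ℝ) ^ 2 := by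
  unfold graphDensity eCnt
  congr 1
  rw [← SimpleGraph.coe_edgeFinset, Set.ncard_coe_finset]
  have := G.two_mul_card_edgeFinset
  rw [univ_product_univ]
  exact_mod_cast this

/-- Jensen's inequality for `x ln x` bounds the potential from below. -/
lemma Hent_le_pot (hn : 0 < Fintype.card V) (P : Finpartition (univ : Finset V)) :
    Hent (graphDensity G) ≤ pot G P P := by
  have hn' : (0 : ℝ) < Fintype.card V := by exact_mod_cast hn
  have hj := Real.convexOn_mul_log.map_sum_le (t := P.parts ×ˢ P.parts)
    (w := fun i => (i.1.card : ℝ) * i.2.card / ((Fintype.card V : ℝ) * Fintype.card V))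
    (p := fun i => dens G i.1 i.2) (fun _ _ => by positivity) ?_
    (fun i _ => graph_dens_nonneg G i.1 i.2)
  · have h1 : ∑ i ∈ P.parts ×ˢ P.parts, (((i.1.card : ℝ) * i.2.card /
        ((Fintype.card V : ℝ) * Fintype.card V)) • dens G i.1 i.2) = graphDensity G := by
      rw [graphDensity_eq, eCnt_eq_sum, ← sum_inter_parts₂ P, Finset.sum_product, Finset.sum_div]
      refine Finset.sum_congr rfl fun U _ => ?_
      rw [Finset.sum_div]
      refine Finset.sum_congr rfl fun W _ => ?_
      rw [univ_inter, univ_inter, ← eCnt_eq_sum, ← card_mul_card_mul_dens, smul_eq_mul]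
      ring
    rw [h1, Finset.sum_product] at hj
    simpa only [Hent, pot, card_univ, smul_eq_mul] using hj
  · rw [Finset.sum_product]
    have := sum_inter_parts₂ P univ univ (fun _ _ => (1 : ℝ))
    simp only [Finset.sum_const, nsmul_eq_mul, mul_one, univ_inter, card_univ] at this
    simp_rw [← Finset.sum_div]
    rw [this, div_self (by positivity)]

lemma graphDensity_lt_one (hn : 0 < Fintype.card V) : graphDensity G < 1 := by
  have hn' : (0 : ℝ) < Fintype.card V := by exact_mod_cast hn
  rw [graphDensity_eq, div_lt_one (by positivity)]
  have : eCnt G univ univ < Fintype.card V ^ 2 := by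
    obtain ⟨v⟩ := Fintype.card_pos_iff.1 hn
    rw [sq, ← card_univ, ← card_product]
    refine Finset.card_lt_card (Finset.filter_ssubset.2 ⟨(v, v), by simp, by simp⟩)
  exact_mod_cast this

end Potential

/-- **The iterative argument (Lemma 3.7).**
Let `α > 0`, `s ∈ ℕ` and `g : ℕ → (0,1)` be decreasing. For every graph `G` of density
`p > 0` and equipartition `P₀` of order `s`, there are equipartitions `Q ⪯ P ⪯ P₀` such
that `Q` is weak `g(|P|)`-regular, `H(Q) − H(P) < α·p·ln(1/p)`, and
`|P| ≤ E^{(⌊1/α⌋)}(s)` where `E(x) = x·2^{16/g(x)⁵}`. -/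
theorem iterated_weak_regularity (α : ℝ) (hα : 0 < α) (s : ℕ) (hs : 0 < s)
    (g : ℕ → ℝ) (hg : ∀ n, g n ∈ Set.Ioo (0 : ℝ) 1) (hgmono : Antitone g)
    (V : Type) [Fintype V] [DecidableEq V] (G : SimpleGraph V)
    (p : ℝ) (hp : 0 < p) (hpd : graphDensity G = p)
    (P₀ : Finpartition (univ : Finset V)) (hP₀ : P₀.IsEquipartition)
    (hP₀s : P₀.parts.card = s) :
    ∃ P Q : Finpartition (univ : Finset V),
      P.IsEquipartition ∧ Q.IsEquipartition ∧ Q ≤ P ∧ P ≤ P₀ ∧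
      IsWeakRegular G (g P.parts.card) Q ∧
      pot G Q Q - pot G P P < α * p * Real.log (1 / p) ∧
      P.parts.card ≤ (fun x : ℕ => ⌈(x : ℝ) * 2 ^ ((16 : ℝ) / g x ^ 5)⌉₊)^[⌊1 / α⌋₊] s := by
  have hn : 0 < Fintype.card V := by
    rcases Nat.eq_zero_or_pos (Fintype.card V) with h | h
    · simp [graphDensity, h] at hpd
      linarith
    · exact h
  have hp1 : p < 1 := hpd ▸ graphDensity_lt_one G hn
  set c := α * p * Real.log (1 / p) with hc
  have hL : 0 < p * Real.log (1 / p) :=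
    mul_pos hp (Real.log_pos (by rw [lt_div_iff₀ hp]; linarith))
  have hlow : ∀ P : Finpartition (univ : Finset V), -(p * Real.log (1 / p)) ≤ pot G P P := by
    intro P
    have := Hent_le_pot G hn P
    rw [hpd] at this
    simpa [Hent] using this
  set E : ℕ → ℕ := fun x : ℕ => ⌈(x : ℝ) * 2 ^ ((16 : ℝ) / g x ^ 5)⌉₊ with hE
  have hexp : ∀ x, 0 ≤ (16 : ℝ) / g x ^ 5 := fun x => by
    have := (hg x).1
    positivity
  have hEid : id ≤ E := by
    intro x
    have h1 : (1 : ℝ) ≤ 2 ^ ((16 : ℝ) / g x ^ 5) := Real.one_le_rpow (by norm_num) (hexp x)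
    have h2 : (x : ℝ) ≤ E x :=
      (le_mul_of_one_le_right (Nat.cast_nonneg x) h1).trans (Nat.le_ceil _)
    exact_mod_cast h2
  have hEmono : Monotone E := by
    intro x y hxy
    refine Nat.ceil_mono ?_
    have h1 : g y ≤ g x := hgmono hxy
    have h2 := (hg y).1
    have h3 : (16 : ℝ) / g x ^ 5 ≤ 16 / g y ^ 5 := by gcongr
    have h4 : (x : ℝ) ≤ y := by exact_mod_cast hxy
    exact mul_le_mul h4 (Real.rpow_le_rpow_of_exponent_le (by norm_num) h3) (by positivity)
      (Nat.cast_nonneg y)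
  set N := ⌊1 / α⌋₊ with hN
  by_contra hcon
  -- While no pair `(P, Q)` works, every regularisation step raises the potential by at least `c`.
  have step : ∀ j ≤ N, ∀ P : Finpartition (univ : Finset V), P.IsEquipartition → P ≤ P₀ →
      P.parts.card ≤ E^[j] s →
      ∃ Q : Finpartition (univ : Finset V), Q.IsEquipartition ∧ Q ≤ P₀ ∧
        Q.parts.card ≤ E^[j + 1] s ∧ pot G P P + c ≤ pot G Q Q := by
    intro j hj P hP hPP hcard
    obtain ⟨Q, hQP, hQ, hreg, hQc⟩ :=
      weak_regularity G (hg P.parts.card).1 (hg P.parts.card).2 hn P hP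
    refine ⟨Q, hQ, hQP.trans hPP, ?_, ?_⟩
    · rw [Function.iterate_succ_apply']
      refine le_trans ?_ (hEmono hcard)
      exact_mod_cast hQc.trans (Nat.le_ceil _)
    · by_contra hlt
      exact hcon ⟨P, Q, hP, hQ, hQP, hPP, hreg, by linarith [not_le.1 hlt],
        hcard.trans (Function.monotone_iterate_of_id_le hEid hj s)⟩
  have chain : ∀ j ≤ N + 1, ∃ P : Finpartition (univ : Finset V), P.IsEquipartition ∧ P ≤ P₀ ∧
      P.parts.card ≤ E^[j] s ∧ pot G P₀ P₀ + j * c ≤ pot G P P := by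
    intro j
    induction j with
    | zero => exact fun _ => ⟨P₀, hP₀, le_rfl, by simp [hP₀s], by simp⟩
    | succ j ih =>
      intro hj
      obtain ⟨P, hP, hPP, hcard, hpot⟩ := ih (by omega)
      obtain ⟨Q, hQ, hQP, hQc, hQpot⟩ := step j (by omega) P hP hPP hcard
      refine ⟨Q, hQ, hQP, hQc, ?_⟩
      push_cast
      linarith
  obtain ⟨P, -, -, -, hpot⟩ := chain (N + 1) le_rfl
  have h1 := pot_nonpos G P
  have h2 := hlow P₀
  have h3 : 1 / α < ((N + 1 : ℕ) : ℝ) := by push_cast; exact Nat.lt_floor_add_one _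
  have h4 : 1 < ((N + 1 : ℕ) : ℝ) * α := (div_lt_iff₀ hα).1 h3
  have h5 : ((N + 1 : ℕ) : ℝ) * c = ((N + 1 : ℕ) : ℝ) * α * (p * Real.log (1 / p)) := by
    rw [hc]; ring
  have h6 := mul_lt_mul_of_pos_right h4 hL
  linarith
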